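/- Let α ∈ (0,1) be irrational with Gauss iterates (α_n) and suppose the Brjuno sum B(α) is finite. Let A > 0, let m be a nonnegative integer, and let (b_j)_{j≥m} be a sequence of nonnegative real numbers such that b_{j−1} ≤ α_j · b_j + A for every j > m and b_j ≤ B(α_{j+1})/(2π) for every j ≥ m. Then b_j ≤ 4A for every j ≥ m. -/

import Mathlib

/-!
Put `β k = ∏ i < k, α_i` and `c j = b j - 4 A`. Two consecutive Gauss iterates satisfy
`α_n α_{n+1} ≤ 1/2`, so two applications of the recursion give
`b j ≤ α_{j+1} α_{j+2} b (j+2) + α_{j+1} A + A`, and since `4 A α_{j+1} α_{j+2} ≤ 2 A` and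
`α_{j+1} A + A ≤ 2 A`, this becomes the homogeneous inequality `c j ≤ α_{j+1} α_{j+2} c (j+2)`.
Hence `β (j+1) c j ≤ β (j+1+2n) c (j+2n)` for all `n`.

The domination hypothesis bounds the right-hand side by `β k B(α_k) / 2π` with `k = j+1+2n`, and
`β k B(α_k)` is the tail of the Brjuno series of `α` starting at index `k`
(`prod_mul_brjunoSum`), which tends to `0`. Therefore `β (j+1) c j ≤ 0`, i.e. `c j ≤ 0`.
-/

/-- The Gauss iterates `α₀ = α`, `α_{n+1} = 1/α_n - ⌊1/α_n⌋`. -/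
noncomputable def gaussIter (α : ℝ) : ℕ → ℝ
  | 0 => α
  | n + 1 => Int.fract (1 / gaussIter α n)

/-- The Brjuno condition: convergence of the series `Σ_n (∏_{i<n} α_i) log(1/α_n)`. -/
def BrjunoCondition (α : ℝ) : Prop :=
  Summable fun n : ℕ =>
    (∏ i ∈ Finset.range n, gaussIter α i) * Real.log (1 / gaussIter α n)

/-- The Brjuno sum `B(α) = Σ_n (∏_{i<n} α_i) log(1/α_n)`. -/
noncomputable def brjunoSum (α : ℝ) : ℝ :=
  ∑' n : ℕ, (∏ i ∈ Finset.range n, gaussIter α i) * Real.log (1 / gaussIter α n)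

theorem gaussIter_gaussIter (α : ℝ) (k n : ℕ) :
    gaussIter (gaussIter α k) n = gaussIter α (k + n) := by
  induction n with
  | zero => rfl
  | succ n ih => rw [← Nat.add_assoc, gaussIter, gaussIter, ih]

theorem gaussIter_mem (α : ℝ) (hα : α ∈ Set.Ioo (0 : ℝ) 1) (hirr : Irrational α) (n : ℕ) :
    gaussIter α n ∈ Set.Ioo (0 : ℝ) 1 ∧ Irrational (gaussIter α n) := by
  induction n with
  | zero => exact ⟨hα, hirr⟩
  | succ n ih =>
    have hi : Irrational (gaussIter α (n + 1)) := by
      rw [gaussIter, Int.fract, one_div]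
      exact ih.2.inv.sub_intCast _
    exact ⟨⟨lt_of_le_of_ne (Int.fract_nonneg _) hi.ne_zero.symm, Int.fract_lt_one _⟩, hi⟩

/-- With `x = α_n`, the integer `⌊1/x⌋` is at least `1`, so `α_n α_{n+1} ≤ 1 - x`; also
`α_n α_{n+1} ≤ x`. -/
theorem gaussIter_mul_succ_le (α : ℝ) (hα : α ∈ Set.Ioo (0 : ℝ) 1) (hirr : Irrational α) (n : ℕ) :
    gaussIter α n * gaussIter α (n + 1) ≤ 1 / 2 := by
  obtain ⟨⟨h0, h1⟩, -⟩ := gaussIter_mem α hα hirr n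
  obtain ⟨⟨-, h1'⟩, -⟩ := gaussIter_mem α hα hirr (n + 1)
  have hfl : (1 : ℝ) ≤ ⌊1 / gaussIter α n⌋ := by
    have : (1 : ℤ) ≤ ⌊1 / gaussIter α n⌋ := by
      rw [Int.le_floor, Int.cast_one]
      exact (one_le_div h0).2 h1.le
    exact_mod_cast this
  have hy : gaussIter α (n + 1) ≤ 1 / gaussIter α n - 1 := by
    rw [gaussIter, Int.fract]
    linarith
  have hxy : gaussIter α n * gaussIter α (n + 1) ≤ 1 - gaussIter α n := by
    calc _ ≤ gaussIter α n * (1 / gaussIter α n - 1) := mul_le_mul_of_nonneg_left hy h0.le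
      _ = 1 - gaussIter α n := by field_simp
  nlinarith

/-- `β k · B(α_k)` is the tail of the Brjuno series of `α` from index `k` on. -/
theorem prod_mul_brjunoSum (α : ℝ) (k : ℕ) :
    (∏ i ∈ Finset.range k, gaussIter α i) * brjunoSum (gaussIter α k) =
      ∑' n : ℕ, (∏ i ∈ Finset.range (n + k), gaussIter α i) *
        Real.log (1 / gaussIter α (n + k)) := by
  rw [brjunoSum, ← tsum_mul_left]
  refine tsum_congr fun n => ?_
  simp only [gaussIter_gaussIter]
  rw [Nat.add_comm n k, Finset.prod_range_add, mul_assoc]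

/-- A sequence satisfying the recursive bound `b_{j-1} ≤ α_j b_j + A` and dominated by
the Brjuno tails `B(α_{j+1})/2π` is bounded by `4A`. -/
theorem recursive_height_bound
    (α : ℝ) (hα : α ∈ Set.Ioo (0 : ℝ) 1) (hirr : Irrational α)
    (hB : BrjunoCondition α)
    (A : ℝ) (hA : 0 < A) (m : ℕ) (b : ℕ → ℝ)
    (hb_nonneg : ∀ j, m ≤ j → 0 ≤ b j)
    (hb_rec : ∀ j, m < j → b (j - 1) ≤ gaussIter α j * b j + A)
    (hb_dom : ∀ j, m ≤ j → b j ≤ brjunoSum (gaussIter α (j + 1)) / (2 * Real.pi)) :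
    ∀ j, m ≤ j → b j ≤ 4 * A := by
  intro j hj
  set β : ℕ → ℝ := fun k => ∏ i ∈ Finset.range k, gaussIter α i with hβ
  have hβpos : ∀ k, 0 < β k := fun k =>
    Finset.prod_pos fun i _ => (gaussIter_mem α hα hirr i).1.1
  have step : ∀ l, m ≤ l →
      b l - 4 * A ≤ gaussIter α (l + 1) * gaussIter α (l + 2) * (b (l + 2) - 4 * A) := by
    intro l hl
    have r1 : b l ≤ gaussIter α (l + 1) * b (l + 1) + A := hb_rec (l + 1) (by omega)
    have r2 : b (l + 1) ≤ gaussIter α (l + 2) * b (l + 2) + A := hb_rec (l + 2) (by omega)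
    obtain ⟨⟨h0, h1⟩, -⟩ := gaussIter_mem α hα hirr (l + 1)
    have r3 := mul_le_mul_of_nonneg_left r2 h0.le
    have r4 := mul_le_mul_of_nonneg_right (gaussIter_mul_succ_le α hα hirr (l + 1)) hA.le
    have r5 := mul_le_mul_of_nonneg_right h1.le hA.le
    rw [show l + 1 + 1 = l + 2 from rfl] at r4
    linarith
  have iter : ∀ n, β (j + 1) * (b j - 4 * A) ≤
      β (2 * n + (j + 1)) * (b (2 * n + j) - 4 * A) := by
    intro n
    induction n with
    | zero => simp
    | succ n ih =>
      refine ih.trans ?_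
      have h := mul_le_mul_of_nonneg_left (step (2 * n + j) (by omega))
        (hβpos (2 * n + (j + 1))).le
      refine h.trans_eq ?_
      rw [show 2 * (n + 1) + (j + 1) = 2 * n + (j + 1) + 1 + 1 by ring,
        show 2 * (n + 1) + j = 2 * n + j + 2 by ring]
      simp only [hβ, Finset.prod_range_succ]
      rw [show 2 * n + j + 1 = 2 * n + (j + 1) by ring,
        show 2 * n + j + 2 = 2 * n + (j + 1) + 1 by ring]
      ring
  have bound : ∀ n, β (j + 1) * (b j - 4 * A) ≤
      β (2 * n + (j + 1)) * brjunoSum (gaussIter α (2 * n + (j + 1))) / (2 * Real.pi) := by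
    intro n
    refine (iter n).trans ?_
    rw [mul_div_assoc]
    refine mul_le_mul_of_nonneg_left ?_ (hβpos _).le
    have := hb_dom (2 * n + j) (by omega)
    rw [Nat.add_assoc] at this
    linarith
  have tail : Filter.Tendsto (fun k => β k * brjunoSum (gaussIter α k)) Filter.atTop (nhds 0) := by
    simp only [hβ, prod_mul_brjunoSum]
    exact tendsto_sum_nat_add fun n : ℕ =>
      (∏ i ∈ Finset.range n, gaussIter α i) * Real.log (1 / gaussIter α n)
  have hsub : Filter.Tendsto (fun n : ℕ => 2 * n + (j + 1)) Filter.atTop Filter.atTop :=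
    Filter.tendsto_atTop_mono (fun n => by dsimp only [id]; omega) Filter.tendsto_id
  have lim := (tail.comp hsub).div_const (2 * Real.pi)
  rw [zero_div] at lim
  have hle : β (j + 1) * (b j - 4 * A) ≤ 0 := ge_of_tendsto' lim bound
  have := nonpos_of_mul_nonpos_right hle (hβpos (j + 1))
  linarith
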